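/- arXiv:1812.03031 — 2 statements merged into one kernel-verified Lean document; each statement's English description precedes it below -/
import Mathlib

section
/- For any joint distribution P_{XY} on 𝒳 × 𝒴 with finite output alphabet 𝒴, and any positive integer M < |𝒴|, the quantized mutual information satisfies ((M-1)/|𝒴|) · I(X;Y) ≤ I(X;[Y]_M) ≤ min{ I(X;Y), log M }. -/
/-!
Write `q`, `r` for the marginals of a joint pmf `p`. Since `𝒴` is finite, `I(X;Y)` splits as a
finite sum over `y` of the contributions `D_y = ∑ₓ p(x,y) log (p(x,y) / (q(x) r(y)))`
(`miBits_eq_sum`). Each series converges, because its terms lie between `(p - q r) / ln 2` and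
`-p log r(y)`; the lower estimate also gives `D_y ≥ 0` (`contrib_nonneg`).

* Lower bound: some `M - 1` symbols carry at least the fraction `(M - 1) / |𝒴|` of `∑ D_y`
  (`exists_heavy_subset`). The quantizer that keeps these symbols apart and merges all others
  retains their contributions unchanged, and the merged symbol contributes a nonnegative amount.
* `I(X;f(Y)) ≤ I(X;Y)`: the log-sum inequality (`log_sum_le`) on each fibre of `f`.
* `I(X;f(Y)) ≤ log M`: `p(x,m) ≤ q(x)` bounds the contribution of `m` by `-r(m) log r(m)`, and
  `log t ≤ t - 1` at `t = 1 / (M r(m))` bounds the sum of these by `log M`.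
-/

open scoped BigOperators

/-- Mutual information (in bits) of a joint probability mass function `p` on `𝒳 × 𝒴`,
with the convention `0 · log 0 = 0`. -/
noncomputable def miBits {𝒳 𝒴 : Type*} (p : 𝒳 → 𝒴 → ℝ) : ℝ :=
  ∑' x, ∑' y, p x y * Real.logb 2 (p x y / ((∑' y', p x y') * (∑' x', p x' y)))

/-- `p` is a joint probability mass function. -/
def IsJointPMF {𝒳 𝒴 : Type*} (p : 𝒳 → 𝒴 → ℝ) : Prop :=
  (∀ x y, 0 ≤ p x y) ∧ Summable (fun xy : 𝒳 × 𝒴 => p xy.1 xy.2) ∧ (∑' x, ∑' y, p x y) = 1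

/-- Joint pmf of `(X, f(Y))` when `(X,Y) ~ p` and `f` is a deterministic `M`-level quantizer. -/
noncomputable def quantJoint {𝒳 𝒴 : Type*} (p : 𝒳 → 𝒴 → ℝ) {M : ℕ} (f : 𝒴 → Fin M) :
    𝒳 → Fin M → ℝ :=
  fun x m => ∑' y, if f y = m then p x y else 0

/-- `I(X;[Y]_M)`: the best mutual information achievable by a deterministic `M`-level
quantizer of `Y`. -/
noncomputable def quantMI {𝒳 𝒴 : Type*} (p : 𝒳 → 𝒴 → ℝ) (M : ℕ) : ℝ :=
  ⨆ f : 𝒴 → Fin M, miBits (quantJoint p f)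

/-- The information distillation function `ID_M(K, β)`. -/
noncomputable def ID (M K : ℕ) (β : ℝ) : ℝ :=
  sInf {v | ∃ p : Fin K → ℕ → ℝ, IsJointPMF p ∧ β ≤ miBits p ∧ v = quantMI p M}

/-- Binary entropy function (bits). -/
noncomputable def hBin (t : ℝ) : ℝ :=
  -(t * Real.logb 2 t) - (1 - t) * Real.logb 2 (1 - t)

/-- A form of `IsJointPMF` for a finite second alphabet, with summability stated column by
column and the sum over `y` taken outermost. -/
structure ColPMF {𝒳 𝒴 : Type*} [Fintype 𝒴] (p : 𝒳 → 𝒴 → ℝ) : Prop where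
  nonneg : ∀ x y, 0 ≤ p x y
  summable : ∀ y, Summable fun x => p x y
  total : ∑ y, ∑' x, p x y = 1

/-- The summand of `miBits p` at `(x, y)`, for a finite second alphabet. -/
noncomputable def miTerm {𝒳 𝒴 : Type*} [Fintype 𝒴] (p : 𝒳 → 𝒴 → ℝ) (x : 𝒳) (y : 𝒴) : ℝ :=
  p x y * Real.logb 2 (p x y / ((∑ y', p x y') * (∑' x', p x' y)))

/-- The contribution `D_y = ∑ₓ p(x,y) log (p(x,y) / (q(x) r(y)))` of the symbol `y` to the mutual
information; it equals `r(y)` times the divergence of `P_{X|Y=y}` from `P_X`. -/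
noncomputable def contrib {𝒳 𝒴 : Type*} [Fintype 𝒴] (p : 𝒳 → 𝒴 → ℝ) (y : 𝒴) : ℝ :=
  ∑' x, miTerm p x y

theorem IsJointPMF.colPMF {𝒳 𝒴 : Type*} [Fintype 𝒴] {p : 𝒳 → 𝒴 → ℝ} (hp : IsJointPMF p) :
    ColPMF p := by
  obtain ⟨h0, hs, h1⟩ := hp
  have hc : ∀ y, Summable fun x => p x y := fun y =>
    hs.comp_injective (i := fun x => (x, y)) (fun a b h => (Prod.mk.inj h).1)
  refine ⟨h0, hc, ?_⟩
  rw [← Summable.tsum_finsetSum (fun y _ => hc y), ← h1]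
  simp only [tsum_fintype]

/-! ### The log-sum inequality -/

/-- The tangent-line bound `a ln (a/b) ≥ a - b`, in bits. -/
theorem mul_logb_div_ge {a b : ℝ} (ha : 0 ≤ a) (hb : 0 ≤ b) (hab : b = 0 → a = 0) :
    (a - b) / Real.log 2 ≤ a * Real.logb 2 (a / b) := by
  have hl : 0 < Real.log 2 := Real.log_pos one_lt_two
  rw [Real.logb, mul_div_assoc', div_le_div_iff_of_pos_right hl]
  rcases ha.eq_or_lt with rfl | ha
  · simpa using hb
  have hb : 0 < b := lt_of_le_of_ne hb fun h => ha.ne' (hab h.symm)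
  have h := Real.one_sub_inv_le_log_of_pos (div_pos ha hb)
  have h2 := mul_le_mul_of_nonneg_left h ha.le
  have h3 : a * (1 - (a / b)⁻¹) = a - b := by field_simp
  linarith

/-- The log-sum inequality. -/
theorem log_sum_le {ι : Type*} (s : Finset ι) (a b : ι → ℝ) (ha : ∀ i, 0 ≤ a i)
    (hb : ∀ i, 0 ≤ b i) (hab : ∀ i, b i = 0 → a i = 0) :
    (∑ i ∈ s, a i) * Real.logb 2 ((∑ i ∈ s, a i) / ∑ i ∈ s, b i)
      ≤ ∑ i ∈ s, a i * Real.logb 2 (a i / b i) := by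
  have hA : 0 ≤ ∑ i ∈ s, a i := Finset.sum_nonneg fun i _ => ha i
  rcases hA.eq_or_lt with hA0 | hA
  · have h := (Finset.sum_eq_zero_iff_of_nonneg (fun i _ => ha i)).1 hA0.symm
    rw [← hA0, zero_mul]
    exact (Finset.sum_eq_zero fun i hi => by rw [h i hi, zero_mul]).ge
  have hB : 0 < ∑ i ∈ s, b i := by
    refine lt_of_le_of_ne (Finset.sum_nonneg fun i _ => hb i) fun h => hA.ne' ?_
    have h := (Finset.sum_eq_zero_iff_of_nonneg (fun i _ => hb i)).1 h.symm
    exact Finset.sum_eq_zero fun i hi => hab i (h i hi)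
  -- the tangent-line bound is applied with `b i` rescaled by the ratio `c` of the totals
  set c := (∑ i ∈ s, a i) / ∑ i ∈ s, b i with hc
  have hcpos : 0 < c := div_pos hA hB
  have key : ∀ i ∈ s, a i * Real.logb 2 c + (a i - b i * c) / Real.log 2
      ≤ a i * Real.logb 2 (a i / b i) := by
    intro i _
    rcases (ha i).eq_or_lt with h0 | h0
    · have := mul_logb_div_ge (ha i) (mul_nonneg (hb i) hcpos.le) fun _ => h0.symm
      simpa [← h0] using this
    have hbi : 0 < b i := lt_of_le_of_ne (hb i) fun h => h0.ne' (hab i h.symm)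
    have := mul_logb_div_ge (ha i) (mul_nonneg (hb i) hcpos.le)
      fun h => absurd h (mul_pos hbi hcpos).ne'
    rw [← div_div, Real.logb_div (div_pos h0 hbi).ne' hcpos.ne'] at this
    linarith
  have hsum := Finset.sum_le_sum key
  rw [Finset.sum_add_distrib, ← Finset.sum_mul, ← Finset.sum_div, Finset.sum_sub_distrib,
    ← Finset.sum_mul, hc, mul_div_cancel₀ _ hB.ne', sub_self, zero_div, add_zero] at hsum
  exact hsum

/-! ### Contributions of single symbols -/

section Contributions

variable {𝒳 𝒴 : Type*} [Fintype 𝒴] {p : 𝒳 → 𝒴 → ℝ}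

theorem ColPMF.le_row (hp : ColPMF p) (x : 𝒳) (y : 𝒴) : p x y ≤ ∑ y', p x y' :=
  Finset.single_le_sum (f := fun y => p x y) (fun y _ => hp.nonneg x y) (Finset.mem_univ y)

theorem ColPMF.le_col (hp : ColPMF p) (x : 𝒳) (y : 𝒴) : p x y ≤ ∑' x', p x' y :=
  (hp.summable y).le_tsum x fun j _ => hp.nonneg j y

theorem ColPMF.row_nonneg (hp : ColPMF p) (x : 𝒳) : 0 ≤ ∑ y', p x y' :=
  Finset.sum_nonneg fun y _ => hp.nonneg x y

theorem ColPMF.col_nonneg (hp : ColPMF p) (y : 𝒴) : 0 ≤ ∑' x', p x' y :=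
  tsum_nonneg fun x => hp.nonneg x y

theorem ColPMF.eq_zero_of_mul (hp : ColPMF p) (x : 𝒳) (y : 𝒴)
    (h : (∑ y', p x y') * (∑' x', p x' y) = 0) : p x y = 0 := by
  rcases mul_eq_zero.1 h with h | h
  · exact le_antisymm (h ▸ hp.le_row x y) (hp.nonneg x y)
  · exact le_antisymm (h ▸ hp.le_col x y) (hp.nonneg x y)

theorem ColPMF.summable_row (hp : ColPMF p) : Summable fun x => ∑ y', p x y' :=
  summable_sum fun y _ => hp.summable y

theorem ColPMF.tsum_row (hp : ColPMF p) : ∑' x, ∑ y', p x y' = 1 := by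
  rw [Summable.tsum_finsetSum (fun y _ => hp.summable y), hp.total]

theorem ColPMF.miTerm_ge (hp : ColPMF p) (x : 𝒳) (y : 𝒴) :
    (p x y - (∑ y', p x y') * (∑' x', p x' y)) / Real.log 2 ≤ miTerm p x y :=
  mul_logb_div_ge (hp.nonneg x y) (mul_nonneg (hp.row_nonneg x) (hp.col_nonneg y))
    (hp.eq_zero_of_mul x y)

theorem ColPMF.miTerm_le (hp : ColPMF p) (x : 𝒳) (y : 𝒴) :
    miTerm p x y ≤ p x y * -Real.logb 2 (∑' x', p x' y) := by
  unfold miTerm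
  rcases (hp.nonneg x y).eq_or_lt with h | h
  · simp [← h]
  have hq : 0 < ∑ y', p x y' := h.trans_le (hp.le_row x y)
  have hr : 0 < ∑' x', p x' y := h.trans_le (hp.le_col x y)
  refine mul_le_mul_of_nonneg_left ?_ h.le
  rw [← Real.logb_inv]
  refine Real.logb_le_logb_of_le one_lt_two (by positivity) ?_
  rw [← div_div, ← one_div]
  exact div_le_div_of_nonneg_right ((div_le_one hq).2 (hp.le_row x y)) hr.le

theorem ColPMF.summable_lower (hp : ColPMF p) (y : 𝒴) :
    Summable fun x => (p x y - (∑ y', p x y') * (∑' x', p x' y)) / Real.log 2 :=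
  ((hp.summable y).sub (hp.summable_row.mul_right _)).div_const _

theorem ColPMF.summable_miTerm (hp : ColPMF p) (y : 𝒴) : Summable fun x => miTerm p x y := by
  have hU := (hp.summable y).mul_right (-Real.logb 2 (∑' x', p x' y))
  have hL := hp.summable_lower y
  have h := Summable.of_nonneg_of_le (fun x => sub_nonneg.2 (hp.miTerm_ge x y))
    (fun x => sub_le_sub_right (hp.miTerm_le x y) _) (hU.sub hL)
  simpa using h.add hL

theorem ColPMF.contrib_nonneg (hp : ColPMF p) (y : 𝒴) : 0 ≤ contrib p y := by
  have h := (hp.summable_lower y).tsum_le_tsum (fun x => hp.miTerm_ge x y) (hp.summable_miTerm y)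
  rw [tsum_div_const, (hp.summable y).tsum_sub (hp.summable_row.mul_right _), tsum_mul_right,
    hp.tsum_row, one_mul, sub_self, zero_div] at h
  exact h

theorem miBits_eq_tsum (p : 𝒳 → 𝒴 → ℝ) : miBits p = ∑' x, ∑ y, miTerm p x y := by
  simp only [miBits, miTerm, tsum_fintype]

theorem ColPMF.miBits_eq_sum (hp : ColPMF p) : miBits p = ∑ y, contrib p y := by
  rw [miBits_eq_tsum, Summable.tsum_finsetSum fun y _ => hp.summable_miTerm y]
  rfl

/-- Mutual information is at most the logarithm of the size of the second alphabet. -/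
theorem ColPMF.miBits_le_logb_card [Nonempty 𝒴] (hp : ColPMF p) :
    miBits p ≤ Real.logb 2 (Fintype.card 𝒴) := by
  have hl : 0 < Real.log 2 := Real.log_pos one_lt_two
  have hN : (0 : ℝ) < Fintype.card 𝒴 := by exact_mod_cast Fintype.card_pos
  set N : ℝ := (Fintype.card 𝒴 : ℝ)
  rw [hp.miBits_eq_sum]
  have key : ∀ y ∈ Finset.univ, contrib p y ≤
      (∑' x, p x y) * Real.logb 2 N + (N⁻¹ - ∑' x, p x y) / Real.log 2 := by
    intro y _
    have h1 := (hp.summable_miTerm y).tsum_le_tsum (fun x => hp.miTerm_le x y)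
      ((hp.summable y).mul_right _)
    rw [tsum_mul_right] at h1
    refine h1.trans ?_
    rcases (hp.col_nonneg y).eq_or_lt with h | h
    · rw [← h]
      simp only [zero_mul, sub_zero, zero_add]
      positivity
    -- the tangent-line bound compares `r(y)` with the uniform mass `1 / N`
    have h2 := mul_logb_div_ge h.le (inv_nonneg.2 hN.le) fun h => absurd h (inv_pos.2 hN).ne'
    rw [div_inv_eq_mul, Real.logb_mul h.ne' hN.ne'] at h2
    have h3 : (N⁻¹ - ∑' x, p x y) / Real.log 2 = -(((∑' x, p x y) - N⁻¹) / Real.log 2) := by ring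
    rw [h3]
    linarith
  refine (Finset.sum_le_sum key).trans (le_of_eq ?_)
  rw [Finset.sum_add_distrib, ← Finset.sum_mul, hp.total, ← Finset.sum_div,
    Finset.sum_sub_distrib, hp.total, Finset.sum_const, Finset.card_univ, nsmul_eq_mul,
    mul_inv_cancel₀ hN.ne', sub_self, zero_div, add_zero, one_mul]

end Contributions

/-! ### Quantized distributions -/

section Quantizer

variable {𝒳 𝒴 : Type*} [Fintype 𝒴] {p : 𝒳 → 𝒴 → ℝ} {M : ℕ}

theorem quantJoint_eq (p : 𝒳 → 𝒴 → ℝ) (f : 𝒴 → Fin M) (x : 𝒳) (m : Fin M) :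
    quantJoint p f x m = ∑ y with f y = m, p x y := by
  rw [quantJoint, tsum_fintype, Finset.sum_filter]

theorem row_quantJoint (p : 𝒳 → 𝒴 → ℝ) (f : 𝒴 → Fin M) (x : 𝒳) :
    ∑ m, quantJoint p f x m = ∑ y, p x y := by
  simp only [quantJoint_eq]
  exact Finset.sum_fiberwise _ _ _

theorem ColPMF.col_quantJoint (hp : ColPMF p) (f : 𝒴 → Fin M) (m : Fin M) :
    ∑' x, quantJoint p f x m = ∑ y with f y = m, ∑' x, p x y := by
  simp only [quantJoint_eq]
  exact Summable.tsum_finsetSum fun y _ => hp.summable y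

theorem ColPMF.quantJoint (hp : ColPMF p) (f : 𝒴 → Fin M) : ColPMF (quantJoint p f) where
  nonneg x m := by
    rw [quantJoint_eq]
    exact Finset.sum_nonneg fun y _ => hp.nonneg x y
  summable m := by
    simp only [quantJoint_eq]
    exact summable_sum fun y _ => hp.summable y
  total := by
    simp only [hp.col_quantJoint]
    rw [Finset.sum_fiberwise, hp.total]

/-- Data processing: the log-sum inequality on each fibre of `f`, summed over `x`. -/
theorem ColPMF.miBits_quantJoint_le (hp : ColPMF p) (f : 𝒴 → Fin M) :
    miBits (_root_.quantJoint p f) ≤ miBits p := by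
  rw [miBits_eq_tsum, miBits_eq_tsum]
  refine Summable.tsum_le_tsum (fun x => ?_)
    (summable_sum fun m _ => (hp.quantJoint f).summable_miTerm m)
    (summable_sum fun y _ => hp.summable_miTerm y)
  rw [← Finset.sum_fiberwise Finset.univ f]
  refine Finset.sum_le_sum fun m _ => ?_
  have h := log_sum_le (Finset.univ.filter fun y => f y = m) (fun y => p x y)
    (fun y => (∑ y', p x y') * ∑' x', p x' y) (fun y => hp.nonneg x y)
    (fun y => mul_nonneg (hp.row_nonneg x) (hp.col_nonneg y)) (hp.eq_zero_of_mul x)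
  rw [← Finset.mul_sum, ← hp.col_quantJoint, ← quantJoint_eq] at h
  unfold miTerm
  rw [row_quantJoint]
  exact h

/-- A symbol that the quantizer merges with no other keeps its contribution. -/
theorem contrib_quantJoint_of_alone (p : 𝒳 → 𝒴 → ℝ) (f : 𝒴 → Fin M) (y : 𝒴)
    (hy : ∀ z, f z = f y → z = y) : contrib (quantJoint p f) (f y) = contrib p y := by
  have hq : ∀ x, quantJoint p f x (f y) = p x y := by
    intro x
    have : (Finset.univ.filter fun z => f z = f y) = {y} := by
      ext z
      simp only [Finset.mem_filter, Finset.mem_univ, true_and, Finset.mem_singleton]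
      exact ⟨hy z, fun h => h ▸ rfl⟩
    rw [quantJoint_eq, this, Finset.sum_singleton]
  simp only [contrib, miTerm, hq, row_quantJoint]

end Quantizer

/-! ### Choosing the symbols to keep -/

/-- Some `k` of the values `d i` carry at least the fraction `k / |ι|` of their total. Starting
from the full set, discarding a smallest element never lowers the average. -/
theorem exists_heavy_subset {ι : Type*} [Fintype ι] (d : ι → ℝ) (k : ℕ)
    (hk : k ≤ Fintype.card ι) :
    ∃ S : Finset ι, S.card = k ∧ (k : ℝ) * ∑ i, d i ≤ Fintype.card ι * ∑ i ∈ S, d i := by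
  classical
  induction hk using Nat.decreasingInduction with
  | self => exact ⟨Finset.univ, Finset.card_univ, le_rfl⟩
  | of_succ k hk ih =>
    obtain ⟨S, hS, h⟩ := ih
    obtain ⟨i, hi, hmin⟩ := S.exists_min_image d (Finset.card_pos.1 (by omega))
    refine ⟨S.erase i, by rw [Finset.card_erase_of_mem hi, hS]; rfl, ?_⟩
    have h1 : ((k : ℝ) + 1) * d i ≤ ∑ j ∈ S, d j := by
      have := Finset.card_nsmul_le_sum S d (d i) hmin
      rw [hS, nsmul_eq_mul] at this
      exact_mod_cast this
    have h2 := Finset.add_sum_erase S d hi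
    have hN : (0 : ℝ) ≤ Fintype.card ι := Nat.cast_nonneg _
    have hk0 : (0 : ℝ) ≤ k := Nat.cast_nonneg _
    push_cast at h
    have h3 : (k : ℝ) * ∑ j ∈ S, d j ≤ (k + 1) * ∑ j ∈ S.erase i, d j := by
      rw [← h2] at h1 ⊢
      linarith
    have h4 := mul_le_mul_of_nonneg_left h hk0
    have h5 := mul_le_mul_of_nonneg_left h3 hN
    have hk1 : (0 : ℝ) < k + 1 := by linarith
    refine le_of_mul_le_mul_left ?_ hk1
    linarith

/-- Proposition 1 (Simple bounds): for finite `𝒴` and `M < |𝒴|`,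
`((M-1)/|𝒴|) I(X;Y) ≤ I(X;[Y]_M) ≤ min{I(X;Y), log M}`. -/
theorem simple_bounds {𝒳 𝒴 : Type*} [Countable 𝒳] [Fintype 𝒴]
    (p : 𝒳 → 𝒴 → ℝ) (hp : IsJointPMF p) (M : ℕ) (hM : 0 < M)
    (hMY : M < Fintype.card 𝒴) :
    ((M : ℝ) - 1) / (Fintype.card 𝒴 : ℝ) * miBits p ≤ quantMI p M ∧
    quantMI p M ≤ min (miBits p) (Real.logb 2 M) := by
  classical
  have hc := hp.colPMF
  obtain ⟨k, rfl⟩ : ∃ k, M = k + 1 := ⟨M - 1, by omega⟩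
  constructor
  · obtain ⟨S, hS, h⟩ := exists_heavy_subset (contrib p) k (by omega)
    let e : S ≃ Fin k := S.equivFinOfCardEq hS
    -- symbols of `S` get distinct values below the last one, which all other symbols share
    let f : 𝒴 → Fin (k + 1) := fun y =>
      if hy : y ∈ S then (e ⟨y, hy⟩).castSucc else Fin.last k
    have alone : ∀ y ∈ S, ∀ z, f z = f y → z = y := by
      intro y hy z hz
      by_cases hzS : z ∈ S
      · simp only [f, hy, hzS, dite_true] at hz
        have := e.injective (Fin.castSucc_injective k hz)
        exact congrArg Subtype.val this
      · simp only [f, hy, hzS, dite_true, dite_false] at hz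
        exact absurd hz.symm (Fin.castSucc_lt_last _).ne
    have hf : ∑ y ∈ S, contrib p y ≤ miBits (quantJoint p f) := by
      rw [(hc.quantJoint f).miBits_eq_sum]
      calc ∑ y ∈ S, contrib p y = ∑ y ∈ S, contrib (quantJoint p f) (f y) :=
            Finset.sum_congr rfl fun y hy => (contrib_quantJoint_of_alone p f y (alone y hy)).symm
        _ = ∑ m ∈ S.image f, contrib (quantJoint p f) m :=
            (Finset.sum_image fun a _ b hb hab => alone b hb a hab).symm
        _ ≤ ∑ m, contrib (quantJoint p f) m :=
            Finset.sum_le_sum_of_subset_of_nonneg (Finset.subset_univ _)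
              fun m _ _ => (hc.quantJoint f).contrib_nonneg m
    have hN : (0 : ℝ) < Fintype.card 𝒴 := by exact_mod_cast (by omega : 0 < Fintype.card 𝒴)
    refine le_trans ?_ (le_ciSup (f := fun f : 𝒴 → Fin (k + 1) => miBits (quantJoint p f))
      (Set.finite_range _).bddAbove f)
    refine le_trans ?_ hf
    rw [hc.miBits_eq_sum, div_mul_eq_mul_div, div_le_iff₀ hN]
    push_cast
    linarith
  · refine ciSup_le fun f => le_min (hc.miBits_quantJoint_le f) ?_
    have := (hc.quantJoint f).miBits_le_logb_card
    rwa [Fintype.card_fin] at this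
end

section
/- For every positive integer K, every β > 0, and every positive integer M, the infimum of I(X;[Y]_M) over all joint distributions P_{XY} with |𝒳| = K and I(X;Y) ≥ β equals the infimum of I(X;[Y]_M) over all joint distributions P_{XY} with |𝒳| = K and I(X;Y) = β. -/
/-!
The idea is erasure. Given `(X, Y) ~ p` with `I(X;Y) ≥ β`, put `t = β / I(X;Y) ∈ (0, 1]` and let `Y'`
equal `Y` with probability `t` and an erasure symbol with probability `1 - t`, independently of
`(X, Y)`. Then `I(X;Y') = t * I(X;Y) = β` exactly (`miBits_erase`).

A quantizer `f` of `Y'` restricts to a quantizer `g` of `Y`. The law of `(X, f(Y'))` is the mixture of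
the law of `(X, g(Y))` and a product law with the same `X`-marginal, so the log-sum inequality
(`cell_convex`) gives `I(X; f(Y')) ≤ t * I(X; g(Y)) ≤ I(X; g(Y))` (`miBits_quant_erase_le`). Hence
erasing does not increase `I(X;[Y]_M)`, and every value in the first set dominates a value in the
second one, while the second set is contained in the first.
-/

open scoped BigOperators

/-! ### Erasing the output symbol -/

theorem isJointPMF_iff {K : ℕ} (p : Fin K → ℕ → ℝ) :
    IsJointPMF p ↔ (∀ x y, 0 ≤ p x y) ∧ (∀ x, Summable (p x)) ∧ ∑ x, ∑' y, p x y = 1 := by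
  unfold IsJointPMF
  rw [tsum_fintype]
  refine and_congr_right fun h => and_congr_left fun _ => ?_
  rw [summable_prod_of_nonneg (fun xy => h xy.1 xy.2)]
  exact ⟨fun H => H.1, fun H => ⟨H, (hasSum_fintype _).summable⟩⟩

/-- The joint law of `X` and the erased version of `Y`: symbol `0` is the erasure (of probability
`1 - t`) and `y + 1` stands for the symbol `y` of the original alphabet. -/
noncomputable def erase {K : ℕ} (p : Fin K → ℕ → ℝ) (t : ℝ) : Fin K → ℕ → ℝ :=
  fun x n => Nat.casesOn n ((1 - t) * ∑' y, p x y) (fun y => t * p x y)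

theorem erase_zero {K : ℕ} (p : Fin K → ℕ → ℝ) (t : ℝ) (x : Fin K) :
    erase p t x 0 = (1 - t) * ∑' y, p x y := rfl

theorem erase_succ {K : ℕ} (p : Fin K → ℕ → ℝ) (t : ℝ) (x : Fin K) (y : ℕ) :
    erase p t x (y + 1) = t * p x y := rfl

theorem summable_erase {K : ℕ} {p : Fin K → ℕ → ℝ} {x : Fin K} (hs : Summable (p x)) (t : ℝ) :
    Summable (erase p t x) := by
  rw [← summable_nat_add_iff 1]
  simpa only [erase_succ] using hs.mul_left t

theorem tsum_erase {K : ℕ} {p : Fin K → ℕ → ℝ} {x : Fin K} (hs : Summable (p x)) (t : ℝ) :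
    ∑' y, erase p t x y = ∑' y, p x y := by
  rw [(summable_erase hs t).tsum_eq_zero_add]
  simp only [erase_zero, erase_succ, tsum_mul_left]
  ring

theorem isJointPMF_erase {K : ℕ} {p : Fin K → ℕ → ℝ} (hp : IsJointPMF p) {t : ℝ}
    (h0 : 0 ≤ t) (h1 : t ≤ 1) : IsJointPMF (erase p t) := by
  rw [isJointPMF_iff] at hp ⊢
  obtain ⟨hn, hs, hsum⟩ := hp
  refine ⟨fun x y => ?_, fun x => summable_erase (hs x) t, ?_⟩
  · cases y with
    | zero => exact mul_nonneg (by linarith) (tsum_nonneg (hn x))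
    | succ y => exact mul_nonneg h0 (hn x y)
  · simpa only [fun x => tsum_erase (hs x) t] using hsum

/-- The erasure symbol is independent of `X`, so it contributes nothing; the other symbols
contribute `t` times what they contributed before. -/
theorem miBits_erase {K : ℕ} {p : Fin K → ℕ → ℝ} (hp : IsJointPMF p) {t : ℝ} (h0 : t ≠ 0) :
    miBits (erase p t) = t * miBits p := by
  rw [isJointPMF_iff] at hp
  obtain ⟨hn, hs, hsum⟩ := hp
  unfold miBits
  rw [← tsum_mul_left]
  refine tsum_congr fun x => ?_
  rw [← tsum_mul_left]
  simp only [fun x => tsum_erase (hs x) t]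
  -- The reindexing along `Nat.succ` needs no summability, since the term at `0` vanishes.
  rw [← Nat.succ_injective.tsum_eq]
  · refine tsum_congr fun y => ?_
    simp only [Nat.succ_eq_add_one, erase_succ, tsum_mul_left]
    rw [mul_left_comm _ t, mul_div_mul_left _ _ h0, mul_assoc]
  · intro n hne
    cases n with
    | succ y => exact ⟨y, rfl⟩
    | zero =>
      exfalso
      apply hne
      simp only [erase_zero, tsum_mul_left]
      rw [tsum_fintype (L := .unconditional _) (f := fun x => ∑' y, p x y), hsum, mul_one, mul_comm (∑' y, p x y)]
      by_cases h : (1 - t) * ∑' y, p x y = 0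
      · simp [h]
      · simp [div_self h]

/-! ### Mutual information on finite alphabets -/

theorem miBits_fintype {K M : ℕ} (u : Fin K → Fin M → ℝ) :
    miBits u = ∑ x, ∑ m, u x m * Real.logb 2 (u x m / ((∑ m', u x m') * (∑ x', u x' m))) := by
  simp only [miBits, tsum_fintype]

theorem mul_log_lower {p c : ℝ} (hp : 0 ≤ p) (hc : 0 ≤ c) (h : c = 0 → p = 0) :
    p - c ≤ p * Real.log (p / c) := by
  rcases hp.eq_or_lt with rfl | hp
  · simpa using hc
  have hc' : 0 < c := lt_of_le_of_ne hc fun h' => hp.ne' (h h'.symm)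
  have := Real.one_sub_inv_le_log_of_pos (div_pos hp hc')
  calc p - c = p * (1 - (p / c)⁻¹) := by field_simp
    _ ≤ _ := mul_le_mul_of_nonneg_left this hp.le

/-- Log-sum inequality for one cell of a mixture, with weights `t` and `s`, of a joint law with entry
`p` and marginals `a`, `b`, and a product law with entry `a * d` and marginals `a`, `d`. -/
theorem cell_convex {p a b d t s : ℝ} (hp : 0 ≤ p) (hpa : p ≤ a) (hpb : p ≤ b) (hd : 0 ≤ d)
    (ht : 0 ≤ t) (hs : 0 ≤ s) :
    (t * p + s * (a * d)) * Real.logb 2 ((t * p + s * (a * d)) / (a * (t * b + s * d))) ≤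
      t * (p * Real.logb 2 (p / (a * b))) := by
  have h2 : 0 < Real.log 2 := Real.log_pos (by norm_num)
  simp only [Real.logb, ← mul_div_assoc]
  refine div_le_div_of_nonneg_right ?_ h2.le
  have ha : 0 ≤ a := hp.trans hpa
  have hb : 0 ≤ b := hp.trans hpb
  have htp : 0 ≤ t * p := by positivity
  have hsd : 0 ≤ s * (a * d) := by positivity
  rcases (add_nonneg htp hsd).eq_or_lt with hr | hr
  · have h0 : t * p = 0 := by linarith
    rw [← hr, ← mul_assoc t, h0]
    simp
  have ha' : 0 < a := lt_of_le_of_ne ha fun h => by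
    subst h
    have : p = 0 := le_antisymm hpa hp
    simp [this] at hr
  have hB : 0 < t * b + s * d := by
    have : t * p ≤ t * b := mul_le_mul_of_nonneg_left hpb ht
    refine lt_of_le_of_ne (by positivity) fun h => ?_
    have h1 : s * d = 0 := by nlinarith [mul_nonneg hs hd, mul_nonneg ht hb]
    have h3 : s * (a * d) = 0 := by rw [mul_left_comm, h1, mul_zero]
    linarith
  set r := t * p + s * (a * d) with hrdef
  set ρ := r / (a * (t * b + s * d)) with hρdef
  have hρ : 0 < ρ := by positivity
  -- Each part of the mixture is compared with the ratio `ρ` of the mixture by `1 - 1/z ≤ log z`.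
  have e1 : p - a * b * ρ ≤ p * (Real.log (p / (a * b)) - Real.log ρ) := by
    rcases hp.eq_or_lt with h | h
    · rw [← h]; simp; positivity
    have hb' : 0 < b := h.trans_le hpb
    have := mul_log_lower hp (c := a * b * ρ) (by positivity)
      (fun h => absurd h (by positivity))
    rwa [← div_div, Real.log_div (by positivity) hρ.ne'] at this
  have e2 : 1 - ρ ≤ - Real.log ρ := by linarith [Real.log_le_sub_one_of_pos hρ]
  have e3 : ρ * (a * (t * b + s * d)) = r := by rw [hρdef]; field_simp
  have e4 := mul_le_mul_of_nonneg_left e1 ht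
  have e5 := mul_le_mul_of_nonneg_left e2 hsd
  have e6 : r * Real.log ρ = t * p * Real.log ρ + s * (a * d) * Real.log ρ := by
    rw [hrdef]; ring
  nlinarith

theorem miBits_nonneg {K M : ℕ} {u : Fin K → Fin M → ℝ} (hu : ∀ x m, 0 ≤ u x m)
    (h1 : ∑ x, ∑ m, u x m = 1) : 0 ≤ miBits u := by
  have h2 : 0 < Real.log 2 := Real.log_pos (by norm_num)
  rw [miBits_fintype]
  have hz : (0 : ℝ) = ∑ x, ∑ m, (u x m - (∑ m', u x m') * (∑ x', u x' m)) / Real.log 2 := by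
    have : ∑ m, ∑ x, u x m = 1 := by rw [Finset.sum_comm, h1]
    simp only [← Finset.sum_div, Finset.sum_sub_distrib, ← Finset.mul_sum, ← Finset.sum_mul, h1,
      this]
    simp
  rw [hz]
  refine Finset.sum_le_sum fun x _ => Finset.sum_le_sum fun m _ => ?_
  rw [Real.logb, ← mul_div_assoc]
  refine div_le_div_of_nonneg_right (mul_log_lower (hu x m) ?_ ?_) h2.le
  · exact mul_nonneg (Finset.sum_nonneg fun _ _ => hu _ _) (Finset.sum_nonneg fun _ _ => hu _ _)
  · have hr : u x m ≤ ∑ m', u x m' :=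
      Finset.single_le_sum (f := fun m' => u x m') (fun _ _ => hu _ _) (Finset.mem_univ m)
    have hc : u x m ≤ ∑ x', u x' m :=
      Finset.single_le_sum (f := fun x' => u x' m) (fun _ _ => hu _ _) (Finset.mem_univ x)
    intro h
    rcases mul_eq_zero.1 h with h | h
    · exact le_antisymm (h ▸ hr) (hu x m)
    · exact le_antisymm (h ▸ hc) (hu x m)

/-- A crude bound, uniform over joint laws on a fixed finite alphabet: each cell contributes at
most `1 / log 2`, because `log z ≤ z` and an entry is at most each of its marginals. -/
theorem miBits_le {K M : ℕ} {u : Fin K → Fin M → ℝ} (hu : ∀ x m, 0 ≤ u x m) :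
    miBits u ≤ ∑ _x : Fin K, ∑ _m : Fin M, 1 / Real.log 2 := by
  have h2 : 0 < Real.log 2 := Real.log_pos (by norm_num)
  rw [miBits_fintype]
  refine Finset.sum_le_sum fun x _ => Finset.sum_le_sum fun m _ => ?_
  rw [Real.logb, ← mul_div_assoc]
  refine div_le_div_of_nonneg_right ?_ h2.le
  have hr : u x m ≤ ∑ m', u x m' :=
    Finset.single_le_sum (f := fun m' => u x m') (fun _ _ => hu _ _) (Finset.mem_univ m)
  have hc : u x m ≤ ∑ x', u x' m :=
    Finset.single_le_sum (f := fun x' => u x' m) (fun _ _ => hu _ _) (Finset.mem_univ x)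
  have ha := (hu x m).trans hr
  have hb := (hu x m).trans hc
  set a := ∑ m', u x m'
  set b := ∑ x', u x' m
  have hu' := hu x m
  calc u x m * Real.log (u x m / (a * b)) ≤ u x m * (u x m / (a * b)) :=
        mul_le_mul_of_nonneg_left (Real.log_le_self (by positivity)) hu'
    _ = (u x m / a) * (u x m / b) := by rw [div_mul_div_comm, mul_div_assoc]
    _ ≤ 1 := mul_le_one₀ (div_le_one_of_le₀ hr ha) (by positivity) (div_le_one_of_le₀ hc hb)

/-! ### Quantizers of the erased variable -/

theorem summable_quant {p : ℕ → ℝ} (hn : ∀ y, 0 ≤ p y) (hs : Summable p) {M : ℕ} (f : ℕ → Fin M)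
    (m : Fin M) : Summable (fun y => if f y = m then p y else 0) := by
  refine Summable.of_nonneg_of_le (fun y => ?_) (fun y => ?_) hs
  · split_ifs
    exacts [hn y, le_rfl]
  · split_ifs
    exacts [le_rfl, hn y]

theorem quantJoint_nonneg {K M : ℕ} {p : Fin K → ℕ → ℝ} (hn : ∀ x y, 0 ≤ p x y)
    (f : ℕ → Fin M) (x : Fin K) (m : Fin M) : 0 ≤ quantJoint p f x m := by
  refine tsum_nonneg fun y => ?_
  split_ifs
  exacts [hn x y, le_rfl]

theorem sum_quantJoint {K M : ℕ} {p : Fin K → ℕ → ℝ} (hp : IsJointPMF p)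
    (f : ℕ → Fin M) (x : Fin K) : ∑ m, quantJoint p f x m = ∑' y, p x y := by
  rw [isJointPMF_iff] at hp
  unfold quantJoint
  rw [← Summable.tsum_finsetSum fun m _ => summable_quant (hp.1 x) (hp.2.1 x) f m]
  simp

theorem sum_sum_quantJoint {K M : ℕ} {p : Fin K → ℕ → ℝ} (hp : IsJointPMF p)
    (f : ℕ → Fin M) : ∑ x, ∑ m, quantJoint p f x m = 1 := by
  simp only [sum_quantJoint hp]
  exact ((isJointPMF_iff p).1 hp).2.2

/-- Quantizing the erased variable gives a mixture of the quantized original law and a product law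
concentrated on the cell of the erasure symbol. -/
theorem quantJoint_erase {K M : ℕ} {p : Fin K → ℕ → ℝ} (hp : IsJointPMF p) {t : ℝ}
    (h0 : 0 ≤ t) (h1 : t ≤ 1) (f : ℕ → Fin M) (x : Fin K) (m : Fin M) :
    quantJoint (erase p t) f x m = t * quantJoint p (fun y => f (y + 1)) x m +
      (1 - t) * ((∑' y, p x y) * if f 0 = m then 1 else 0) := by
  have hq := (isJointPMF_iff _).1 (isJointPMF_erase hp h0 h1)
  unfold quantJoint
  rw [(summable_quant (hq.1 x) (hq.2.1 x) f m).tsum_eq_zero_add]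
  simp only [erase_zero, erase_succ]
  rw [← tsum_mul_left (f := fun y => if f (y + 1) = m then p x y else 0), add_comm]
  congr 1
  · refine tsum_congr fun y => ?_
    simp
  · split_ifs <;> simp

theorem miBits_quant_erase_le {K M : ℕ} {p : Fin K → ℕ → ℝ} (hp : IsJointPMF p) {t : ℝ}
    (h0 : 0 ≤ t) (h1 : t ≤ 1) (f : ℕ → Fin M) :
    miBits (quantJoint (erase p t) f) ≤ t * miBits (quantJoint p fun y => f (y + 1)) := by
  have hn := quantJoint_nonneg hp.1 fun y => f (y + 1)
  have hsum := ((isJointPMF_iff p).1 hp).2.2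
  rw [miBits_fintype, miBits_fintype, Finset.mul_sum]
  refine Finset.sum_le_sum fun x _ => ?_
  rw [Finset.mul_sum]
  refine Finset.sum_le_sum fun m _ => ?_
  have hcol : ∑ x', quantJoint (erase p t) f x' m =
      t * ∑ x', quantJoint p (fun y => f (y + 1)) x' m +
        (1 - t) * if f 0 = m then 1 else 0 := by
    simp only [quantJoint_erase hp h0 h1, Finset.sum_add_distrib, ← Finset.mul_sum,
      ← Finset.sum_mul, hsum, one_mul]
  rw [sum_quantJoint (isJointPMF_erase hp h0 h1), hcol, quantJoint_erase hp h0 h1,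
    tsum_erase (((isJointPMF_iff p).1 hp).2.1 x), sum_quantJoint hp]
  refine cell_convex (hn x m) ?_ ?_ (by split_ifs <;> norm_num) h0 (by linarith)
  · rw [← sum_quantJoint hp fun y => f (y + 1)]
    exact Finset.single_le_sum (f := fun m' => quantJoint p (fun y => f (y + 1)) x m')
      (fun _ _ => hn _ _) (Finset.mem_univ m)
  · exact Finset.single_le_sum (f := fun x' => quantJoint p (fun y => f (y + 1)) x' m)
      (fun _ _ => hn _ _) (Finset.mem_univ x)

theorem quantMI_nonneg {K M : ℕ} {p : Fin K → ℕ → ℝ} (hp : IsJointPMF p) : 0 ≤ quantMI p M :=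
  Real.iSup_nonneg fun f =>
    miBits_nonneg (quantJoint_nonneg hp.1 f) (sum_sum_quantJoint hp f)

theorem quantMI_erase_le {K M : ℕ} {p : Fin K → ℕ → ℝ} (hp : IsJointPMF p) {t : ℝ}
    (h0 : 0 ≤ t) (h1 : t ≤ 1) : quantMI (erase p t) M ≤ quantMI p M := by
  refine Real.iSup_le (fun f => ?_) (quantMI_nonneg hp)
  have hbdd : BddAbove (Set.range fun g : ℕ → Fin M => miBits (quantJoint p g)) := by
    refine ⟨∑ _x : Fin K, ∑ _m : Fin M, 1 / Real.log 2, ?_⟩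
    rintro _ ⟨g, rfl⟩
    exact miBits_le (quantJoint_nonneg hp.1 g)
  calc miBits (quantJoint (erase p t) f) ≤ t * miBits (quantJoint p fun y => f (y + 1)) :=
        miBits_quant_erase_le hp h0 h1 f
    _ ≤ miBits (quantJoint p fun y => f (y + 1)) :=
        mul_le_of_le_one_left
          (miBits_nonneg (quantJoint_nonneg hp.1 _) (sum_sum_quantJoint hp _)) h1
    _ ≤ quantMI p M := le_ciSup hbdd fun y => f (y + 1)

/-! ### Equality of the infima -/

/-- Corollary 2: the infimum defining `ID_M(K, β)` is unchanged if the constraint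
`I(X;Y) ≥ β` is replaced by `I(X;Y) = β`. -/
theorem inf_eq_inf_equality_constraint (K : ℕ) (hK : 0 < K) (β : ℝ) (hβ : 0 < β)
    (M : ℕ) (hM : 0 < M) :
    sInf {v | ∃ p : Fin K → ℕ → ℝ, IsJointPMF p ∧ β ≤ miBits p ∧ v = quantMI p M} =
    sInf {v | ∃ p : Fin K → ℕ → ℝ, IsJointPMF p ∧ miBits p = β ∧ v = quantMI p M} := by
  have hbdd : BddBelow
      {v | ∃ p : Fin K → ℕ → ℝ, IsJointPMF p ∧ β ≤ miBits p ∧ v = quantMI p M} := by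
    refine ⟨0, ?_⟩
    rintro _ ⟨p, hp, -, rfl⟩
    exact quantMI_nonneg hp
  have hsub : {v | ∃ p : Fin K → ℕ → ℝ, IsJointPMF p ∧ miBits p = β ∧ v = quantMI p M} ⊆
      {v | ∃ p : Fin K → ℕ → ℝ, IsJointPMF p ∧ β ≤ miBits p ∧ v = quantMI p M} := by
    rintro _ ⟨p, hp, h, rfl⟩
    exact ⟨p, hp, h.ge, rfl⟩
  have hdom : ∀ v ∈ {v | ∃ p : Fin K → ℕ → ℝ, IsJointPMF p ∧ β ≤ miBits p ∧ v = quantMI p M},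
      ∃ w ∈ {v | ∃ p : Fin K → ℕ → ℝ, IsJointPMF p ∧ miBits p = β ∧ v = quantMI p M},
        w ≤ v := by
    rintro _ ⟨p, hp, h, rfl⟩
    have hI : 0 < miBits p := hβ.trans_le h
    have h0 : 0 < β / miBits p := div_pos hβ hI
    have h1 : β / miBits p ≤ 1 := div_le_one_of_le₀ h hI.le
    refine ⟨_, ⟨erase p (β / miBits p), isJointPMF_erase hp h0.le h1, ?_, rfl⟩,
      quantMI_erase_le hp h0.le h1⟩
    rw [miBits_erase hp h0.ne', div_mul_cancel₀ _ hI.ne']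
  -- For `β` above the largest possible mutual information both sets are empty.
  rcases Set.eq_empty_or_nonempty
      {v | ∃ p : Fin K → ℕ → ℝ, IsJointPMF p ∧ β ≤ miBits p ∧ v = quantMI p M} with he | hne
  · rw [he] at hsub ⊢
    rw [Set.subset_empty_iff.1 hsub]
  · obtain ⟨v, hv⟩ := hne
    obtain ⟨w, hw, -⟩ := hdom v hv
    refine le_antisymm (csInf_le_csInf hbdd ⟨w, hw⟩ hsub) (le_csInf ⟨v, hv⟩ fun v hv => ?_)
    obtain ⟨w, hw, hwv⟩ := hdom v hv
    exact (csInf_le (hbdd.mono hsub) hw).trans hwv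
end
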